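/- For every integer d ≥ 1 and all real numbers a, b with 1 < a < b < ∞, there exists a constant C = C(d,a,b) > 0 such that: for every open ball B ⊂ ℝ^d, every finite family u_1, …, u_N of continuously differentiable functions from ℝ^d to ℂ whose restrictions to B are orthonormal in L²(B), and every choice of coefficients λ_1, …, λ_N ∈ [0,1], if a ≤ ∫_B ρ(x) dx ≤ b where ρ(x) = Σ_{n=1}^N λ_n |u_n(x)|², then Σ_{n=1}^N λ_n ∫_B |∇u_n(x)|² dx ≥ (1/C) ∫_B ρ(x)^{1+2/d} dx. -/

import Mathlib

open MeasureTheory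
open scoped BigOperators

/-- `|∇f(x)|² = Σᵢ |∂ᵢ f(x)|²` for a function `f : ℝ^d → ℂ`. -/
noncomputable def gradSq {d : ℕ} (f : EuclideanSpace ℝ (Fin d) → ℂ)
    (x : EuclideanSpace ℝ (Fin d)) : ℝ :=
  ∑ i : Fin d, ‖fderiv ℝ f x (EuclideanSpace.single i 1)‖ ^ 2

/-!
The density is `ρ = ‖U‖ ^ 2` for the vector-valued function `U = (√λₙ uₙ)ₙ`, and the kinetic energy
dominates `∫ ‖U'‖ ^ 2`, so the inequality concerns a single function on a convex set `B`.

Truncate `‖U‖ ^ 2` at the levels `2 ^ k * τ`, with `τ` twice the mean of `‖U‖ ^ 2` on `B`. By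
Chebyshev, each truncation vanishes on half of every copy of `B` contracted by `(2 ^ k) ^ (-1 / d)`
towards a point of `B`; averaging the fundamental theorem of calculus over such a copy bounds the
measure of `{2 * 2 ^ k * τ ≤ ‖U‖ ^ 2}` by the energy of `U` in the layer
`{2 ^ k * τ ≤ ‖U‖ ^ 2 < 2 * 2 ^ k * τ}`. The layers are disjoint, and summing over `k` gives the
Gagliardo–Nirenberg–Sobolev inequality
`∫ ρ ^ (1 + 2 / d) ≲ M ^ (2 / d) * (M / |B| ^ (2 / d) + ∫ ‖U'‖ ^ 2)` with `M = ∫ ρ`.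

By Bessel's inequality for the constant function, the mean part of `U` carries mass at most `1`, so
the Poincaré inequality bounds `M - 1` by `|B| ^ (2 / d) * ∫ ‖U'‖ ^ 2`. As `M ≥ a > 1`, this absorbs
the lower-order term.
-/

open AffineMap Metric Module Set
open scoped ENNReal

theorem sq_lintegral_le_lintegral_sq {α : Type*} [MeasurableSpace α] {μ : Measure α}
    [IsProbabilityMeasure μ] {f : α → ℝ≥0∞} (hf : AEMeasurable f μ) :
    (∫⁻ x, f x ∂μ) ^ 2 ≤ ∫⁻ x, f x ^ 2 ∂μ := by
  have holder : ∫⁻ x, f x ∂μ ≤ (∫⁻ x, f x ^ 2 ∂μ) ^ (1 / 2 : ℝ) := by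
    simpa using ENNReal.lintegral_mul_le_Lp_mul_Lq μ Real.HolderConjugate.two_two hf
      (aemeasurable_const (b := (1 : ℝ≥0∞)))
  calc (∫⁻ x, f x ∂μ) ^ 2 ≤ ((∫⁻ x, f x ^ 2 ∂μ) ^ (1 / 2 : ℝ)) ^ 2 := by gcongr
    _ = ∫⁻ x, f x ^ 2 ∂μ := by
      rw [← ENNReal.rpow_natCast, ← ENNReal.rpow_mul]
      norm_num

section Segment

variable {E F : Type*} [NormedAddCommGroup E] [NormedSpace ℝ E] [NormedAddCommGroup F]
  [NormedSpace ℝ F] [CompleteSpace F] {g : E → F}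

theorem enorm_sub_sq_le_mul_lintegral_fderiv (hg : ContDiff ℝ 1 g) (x y : E) :
    ‖g y - g x‖ₑ ^ 2 ≤
      ‖y - x‖ₑ ^ 2 * ∫⁻ t in Ioc (0 : ℝ) 1, ‖fderiv ℝ g (lineMap x y t)‖ₑ ^ 2 := by
  have hcont : Continuous fun t : ℝ => fderiv ℝ g (lineMap x y t) :=
    (hg.continuous_fderiv one_ne_zero).comp (by fun_prop)
  have hderiv (t : ℝ) : HasDerivAt (fun t : ℝ => g (lineMap x y t))
      (fderiv ℝ g (lineMap x y t) (y - x)) t :=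
    (hg.differentiable one_ne_zero _).hasFDerivAt.comp_hasDerivAt t hasDerivAt_lineMap
  have ftc : ∫ t in Ioc (0 : ℝ) 1, fderiv ℝ g (lineMap x y t) (y - x) = g y - g x := by
    rw [← intervalIntegral.integral_of_le zero_le_one,
      intervalIntegral.integral_eq_sub_of_hasDerivAt (fun t _ => hderiv t)
        ((hcont.clm_apply continuous_const).intervalIntegrable _ _)]
    simp
  have : IsProbabilityMeasure (volume.restrict (Ioc (0 : ℝ) 1)) := ⟨by simp⟩
  calc ‖g y - g x‖ₑ ^ 2
      ≤ (∫⁻ t in Ioc (0 : ℝ) 1, ‖y - x‖ₑ * ‖fderiv ℝ g (lineMap x y t)‖ₑ) ^ 2 := by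
        rw [← ftc]
        gcongr
        refine (enorm_integral_le_lintegral_enorm _).trans (lintegral_mono fun t => ?_)
        exact (ContinuousLinearMap.le_opENorm _ _).trans_eq (mul_comm _ _)
    _ = ‖y - x‖ₑ ^ 2 * (∫⁻ t in Ioc (0 : ℝ) 1, ‖fderiv ℝ g (lineMap x y t)‖ₑ) ^ 2 := by
        rw [lintegral_const_mul _ hcont.enorm.measurable, mul_pow]
    _ ≤ ‖y - x‖ₑ ^ 2 * ∫⁻ t in Ioc (0 : ℝ) 1, ‖fderiv ℝ g (lineMap x y t)‖ₑ ^ 2 := by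
        gcongr
        exact sq_lintegral_le_lintegral_sq hcont.enorm.measurable.aemeasurable

theorem enorm_lineMap_sub_sq_le (hg : ContDiff ℝ 1 g) {B : Set E}
    (hBb : Bornology.IsBounded B) {s : ℝ} (hs : 0 ≤ s) {x y : E} (hx : x ∈ B) (hy : y ∈ B) :
    ‖g (lineMap x y s) - g x‖ₑ ^ 2 ≤ ENNReal.ofReal (s * diam B) ^ 2 *
      ∫⁻ t in Ioc (0 : ℝ) 1, ‖fderiv ℝ g (lineMap x y (t * s))‖ₑ ^ 2 := by
  have hdist : ‖lineMap x y s - x‖ₑ ≤ ENNReal.ofReal (s * diam B) := by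
    rw [← ofReal_norm, ← dist_eq_norm, dist_lineMap_left, Real.norm_of_nonneg hs]
    gcongr
    exact dist_le_diam_of_mem hBb hx hy
  calc ‖g (lineMap x y s) - g x‖ₑ ^ 2
      ≤ ‖lineMap x y s - x‖ₑ ^ 2 *
          ∫⁻ t in Ioc (0 : ℝ) 1, ‖fderiv ℝ g (lineMap x (lineMap x y s) t)‖ₑ ^ 2 :=
        enorm_sub_sq_le_mul_lintegral_fderiv hg _ _
    _ ≤ _ := by
        simp only [lineMap_lineMap_right]
        gcongr

end Segment

section Averaging

variable {E F : Type*} [NormedAddCommGroup E] [NormedSpace ℝ E] [FiniteDimensional ℝ E]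
  [MeasurableSpace E] [BorelSpace E] {μ : Measure E} [μ.IsAddHaarMeasure]
  [NormedAddCommGroup F] [NormedSpace ℝ F] [CompleteSpace F]
  {B : Set E} {s : ℝ}

theorem lintegral_comp_lineMap {f : E → ℝ≥0∞} (hf : Measurable f) (x : E) (hs : s ≠ 0) :
    ∫⁻ y, f (lineMap x y s) ∂μ = ENNReal.ofReal |(s ^ finrank ℝ E)⁻¹| * ∫⁻ y, f y ∂μ := by
  calc ∫⁻ y, f (lineMap x y s) ∂μ
      = ∫⁻ y, f (s • y + x) ∂μ := by
        simp_rw [lineMap_apply_module']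
        exact lintegral_sub_right_eq_self (fun y => f (s • y + x)) x
    _ = ∫⁻ z, f (z + x) ∂(μ.map (s • ·)) := by
        rw [lintegral_map (by fun_prop) (by fun_prop)]
    _ = ENNReal.ofReal |(s ^ finrank ℝ E)⁻¹| * ∫⁻ y, f y ∂μ := by
        rw [Measure.map_addHaar_smul μ hs, lintegral_smul_measure, smul_eq_mul,
          lintegral_add_right_eq_self]

theorem setLIntegral_comp_lineMap_le (hB : Convex ℝ B) (hBm : MeasurableSet B) (hs : 0 < s)
    (hs1 : s ≤ 1) {f : E → ℝ≥0∞} (hf : Measurable f) {x : E} (hx : x ∈ B) :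
    ∫⁻ y in B, f (lineMap x y s) ∂μ ≤
      ENNReal.ofReal (s ^ finrank ℝ E)⁻¹ * ∫⁻ y in B, f y ∂μ := by
  calc ∫⁻ y in B, f (lineMap x y s) ∂μ
      ≤ ∫⁻ y, B.indicator f (lineMap x y s) ∂μ := by
        rw [← lintegral_indicator hBm]
        refine lintegral_mono (indicator_le fun y hy => ?_)
        rw [indicator_of_mem (hB.lineMap_mem hx hy ⟨hs.le, hs1⟩)]
    _ = ENNReal.ofReal (s ^ finrank ℝ E)⁻¹ * ∫⁻ y in B, f y ∂μ := by
        rw [lintegral_comp_lineMap (hf.indicator hBm) x hs.ne', lintegral_indicator hBm,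
          abs_of_nonneg (by positivity)]

theorem lintegral_lintegral_lineMap_le (hB : Convex ℝ B) (hBm : MeasurableSet B)
    (hs : s ∈ Icc (0 : ℝ) 1) {f : E → ℝ≥0∞} (hf : Measurable f) :
    ∫⁻ x in B, ∫⁻ y in B, f (lineMap x y s) ∂μ ∂μ ≤
      2 ^ finrank ℝ E * μ B * ∫⁻ y in B, f y ∂μ := by
  have of_half_le (t : ℝ) (ht : 1 / 2 ≤ t) (ht1 : t ≤ 1) :
      ∫⁻ x in B, ∫⁻ y in B, f (lineMap x y t) ∂μ ∂μ ≤
        2 ^ finrank ℝ E * μ B * ∫⁻ y in B, f y ∂μ := by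
    have ht0 : 0 < t := by linarith
    have jacobian_le : ENNReal.ofReal (t ^ finrank ℝ E)⁻¹ ≤ 2 ^ finrank ℝ E := by
      rw [← inv_pow, ENNReal.ofReal_pow (by positivity)]
      gcongr
      rw [ENNReal.ofReal_le_ofNat, inv_le_comm₀ ht0 two_pos]
      simpa using ht
    calc ∫⁻ x in B, ∫⁻ y in B, f (lineMap x y t) ∂μ ∂μ
        ≤ ∫⁻ _ in B, 2 ^ finrank ℝ E * ∫⁻ y in B, f y ∂μ ∂μ := by
          refine setLIntegral_mono' hBm fun x hx => ?_
          exact (setLIntegral_comp_lineMap_le hB hBm ht0 ht1 hf hx).trans (by gcongr)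
      _ = 2 ^ finrank ℝ E * μ B * ∫⁻ y in B, f y ∂μ := by
          rw [setLIntegral_const]
          ring
  rcases le_total (1 / 2) s with h | h
  · exact of_half_le s h hs.2
  · -- Exchanging `x` and `y` replaces `s` by `1 - s`.
    rw [lintegral_lintegral_swap (by fun_prop)]
    simpa only [lineMap_apply_one_sub] using
      of_half_le (1 - s) (by linarith) (by linarith [hs.1])

theorem lintegral_lintegral_enorm_lineMap_sub_sq_le (hB : Convex ℝ B) (hBm : MeasurableSet B)
    (hBb : Bornology.IsBounded B) (hs : s ∈ Icc (0 : ℝ) 1) {g : E → F} (hg : ContDiff ℝ 1 g) :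
    ∫⁻ x in B, ∫⁻ y in B, ‖g (lineMap x y s) - g x‖ₑ ^ 2 ∂μ ∂μ ≤
      ENNReal.ofReal (s * diam B) ^ 2 *
        (2 ^ finrank ℝ E * μ B * ∫⁻ y in B, ‖fderiv ℝ g y‖ₑ ^ 2 ∂μ) := by
  set f : E → ℝ≥0∞ := fun y => ‖fderiv ℝ g y‖ₑ ^ 2
  have hf : Measurable f := ((hg.continuous_fderiv one_ne_zero).enorm.measurable).pow_const 2
  have swap : ∫⁻ x in B, ∫⁻ y in B, (∫⁻ t in Ioc (0 : ℝ) 1, f (lineMap x y (t * s))) ∂μ ∂μ =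
      ∫⁻ t in Ioc (0 : ℝ) 1, (∫⁻ x in B, ∫⁻ y in B, f (lineMap x y (t * s)) ∂μ ∂μ) := by
    have swap_inner (x : E) : ∫⁻ y in B, (∫⁻ t in Ioc (0 : ℝ) 1, f (lineMap x y (t * s))) ∂μ =
        ∫⁻ t in Ioc (0 : ℝ) 1, (∫⁻ y in B, f (lineMap x y (t * s)) ∂μ) :=
      lintegral_lintegral_swap (by fun_prop)
    simp_rw [swap_inner]
    refine lintegral_lintegral_swap (Measurable.aemeasurable ?_)
    exact Measurable.lintegral_prod_right' (f := fun p : (E × ℝ) × E =>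
      f (lineMap p.1.1 p.2 (p.1.2 * s))) (by fun_prop)
  calc ∫⁻ x in B, ∫⁻ y in B, ‖g (lineMap x y s) - g x‖ₑ ^ 2 ∂μ ∂μ
      ≤ ∫⁻ x in B, ∫⁻ y in B, ENNReal.ofReal (s * diam B) ^ 2 *
          (∫⁻ t in Ioc (0 : ℝ) 1, f (lineMap x y (t * s))) ∂μ ∂μ :=
        setLIntegral_mono' hBm fun x hx => setLIntegral_mono' hBm fun y hy =>
          enorm_lineMap_sub_sq_le hg hBb hs.1 hx hy
    _ = ENNReal.ofReal (s * diam B) ^ 2 *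
          ∫⁻ t in Ioc (0 : ℝ) 1, (∫⁻ x in B, ∫⁻ y in B, f (lineMap x y (t * s)) ∂μ ∂μ) := by
        simp_rw [lintegral_const_mul' _ _ (ENNReal.pow_ne_top ENNReal.ofReal_ne_top), swap]
    _ ≤ ENNReal.ofReal (s * diam B) ^ 2 * ∫⁻ _ in Ioc (0 : ℝ) 1,
          2 ^ finrank ℝ E * μ B * ∫⁻ y in B, f y ∂μ := by
        refine mul_le_mul_right (setLIntegral_mono' measurableSet_Ioc fun t ht => ?_) _
        exact lintegral_lintegral_lineMap_le hB hBm
          ⟨mul_nonneg ht.1.le hs.1, mul_le_one₀ ht.2 hs.1 hs.2⟩ hf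
    _ = ENNReal.ofReal (s * diam B) ^ 2 *
          (2 ^ finrank ℝ E * μ B * ∫⁻ y in B, f y ∂μ) := by simp

end Averaging

theorem lintegral_enorm_sq_eq_ofReal {α F : Type*} [MeasurableSpace α] [NormedAddCommGroup F]
    {μ : Measure α} {f : α → F} (hf : Integrable (fun x => ‖f x‖ ^ 2) μ) :
    ∫⁻ x, ‖f x‖ₑ ^ 2 ∂μ = ENNReal.ofReal (∫ x, ‖f x‖ ^ 2 ∂μ) := by
  rw [ofReal_integral_eq_lintegral_ofReal hf (ae_of_all _ fun x => by positivity)]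
  simp_rw [ENNReal.ofReal_pow (norm_nonneg _), ofReal_norm]

theorem integrableOn_of_isBounded {E F : Type*} [MetricSpace E] [ProperSpace E]
    [MeasurableSpace E] [OpensMeasurableSpace E] [NormedAddCommGroup F]
    {μ : Measure E} [IsFiniteMeasureOnCompacts μ] {B : Set E} (hBb : Bornology.IsBounded B)
    {f : E → F} (hf : Continuous f) : IntegrableOn f B μ :=
  (hf.continuousOn.integrableOn_compact hBb.isCompact_closure).mono_set subset_closure

theorem memLp_two_restrict_of_isBounded {E F : Type*} [MetricSpace E] [ProperSpace E]
    [MeasurableSpace E] [OpensMeasurableSpace E] [NormedAddCommGroup F]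
    [SecondCountableTopologyEither E F] {μ : Measure E} [IsFiniteMeasureOnCompacts μ] {B : Set E}
    (hBb : Bornology.IsBounded B) {f : E → F} (hf : Continuous f) : MemLp f 2 (μ.restrict B) :=
  (memLp_two_iff_integrable_sq_norm hf.aestronglyMeasurable).2
    (integrableOn_of_isBounded hBb (hf.norm.pow 2))

theorem measureReal_pos_of_setIntegral_ne_zero {α F : Type*} [MeasurableSpace α]
    [NormedAddCommGroup F] [NormedSpace ℝ F] {μ : Measure α} {B : Set α} (hB : μ B ≠ ⊤)
    {f : α → F} (hf : ∫ x in B, f x ∂μ ≠ 0) : 0 < μ.real B := by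
  refine measureReal_nonneg.lt_of_ne' fun h => hf ?_
  exact setIntegral_measure_zero f ((measureReal_eq_zero_iff hB).1 h)

section Variance

variable {α F : Type*} [MeasurableSpace α] [NormedAddCommGroup F] [InnerProductSpace ℝ F]
  [CompleteSpace F] {μ : Measure α} [IsFiniteMeasure μ] {f : α → F}

theorem integral_norm_const_sub_sq (hf : MemLp f 2 μ) (c : F) :
    ∫ x, ‖c - f x‖ ^ 2 ∂μ =
      μ.real univ * ‖c‖ ^ 2 - 2 * inner ℝ c (∫ x, f x ∂μ) + ∫ x, ‖f x‖ ^ 2 ∂μ := by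
  have hf1 : Integrable f μ := hf.integrable one_le_two
  have hinner : Integrable (fun x => 2 * inner ℝ c (f x)) μ := (hf1.const_inner c).const_mul 2
  have hsub : Integrable (fun x => ‖c‖ ^ 2 - 2 * inner ℝ c (f x)) μ :=
    (integrable_const _).sub hinner
  simp_rw [norm_sub_sq_real]
  rw [integral_add hsub (hf.integrable_norm_pow two_ne_zero),
    integral_sub (integrable_const _) hinner, integral_const_mul, integral_inner hf1,
    integral_const, smul_eq_mul]

theorem integrable_integral_norm_sub_sq (hf : MemLp f 2 μ) :
    Integrable (fun x => ∫ y, ‖f x - f y‖ ^ 2 ∂μ) μ := by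
  simp_rw [integral_norm_const_sub_sq hf]
  exact (((hf.integrable_norm_pow two_ne_zero).const_mul _).sub
    (((hf.integrable one_le_two).inner_const _).const_mul 2)).add (integrable_const _)

theorem integral_integral_norm_sub_sq (hf : MemLp f 2 μ) :
    ∫ x, ∫ y, ‖f x - f y‖ ^ 2 ∂μ ∂μ =
      2 * (μ.real univ * ∫ x, ‖f x‖ ^ 2 ∂μ - ‖∫ x, f x ∂μ‖ ^ 2) := by
  have hf1 : Integrable f μ := hf.integrable one_le_two
  have hnorm : Integrable (fun x => μ.real univ * ‖f x‖ ^ 2) μ :=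
    (hf.integrable_norm_pow two_ne_zero).const_mul _
  have hinner : Integrable (fun x => 2 * inner ℝ (f x) (∫ y, f y ∂μ)) μ :=
    (hf1.inner_const _).const_mul 2
  have hsub : Integrable
      (fun x => μ.real univ * ‖f x‖ ^ 2 - 2 * inner ℝ (f x) (∫ y, f y ∂μ)) μ := hnorm.sub hinner
  simp_rw [integral_norm_const_sub_sq hf]
  rw [integral_add hsub (integrable_const _), integral_sub hnorm hinner, integral_const_mul,
    integral_const_mul, integral_const, smul_eq_mul]
  simp_rw [real_inner_comm (∫ y, f y ∂μ)]
  rw [integral_inner hf1, real_inner_self_eq_norm_sq]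
  ring

theorem lintegral_lintegral_enorm_sub_sq (hf : MemLp f 2 μ) :
    ∫⁻ x, ∫⁻ y, ‖f y - f x‖ₑ ^ 2 ∂μ ∂μ =
      ENNReal.ofReal (2 * (μ.real univ * ∫ x, ‖f x‖ ^ 2 ∂μ - ‖∫ x, f x ∂μ‖ ^ 2)) := by
  rw [← integral_integral_norm_sub_sq hf, ofReal_integral_eq_lintegral_ofReal
    (integrable_integral_norm_sub_sq hf)
    (ae_of_all _ fun x => integral_nonneg fun y => by positivity)]
  refine lintegral_congr fun x => ?_
  simp_rw [enorm_sub_rev _ (f x)]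
  refine lintegral_enorm_sq_eq_ofReal ?_
  exact ((memLp_const (f x)).sub hf).integrable_norm_pow two_ne_zero

end Variance

section Poincare

variable {E F : Type*} [NormedAddCommGroup E] [NormedSpace ℝ E] [FiniteDimensional ℝ E]
  [MeasurableSpace E] [BorelSpace E] {μ : Measure E} [μ.IsAddHaarMeasure]
  [NormedAddCommGroup F] [InnerProductSpace ℝ F] [CompleteSpace F]
  {B : Set E}

theorem poincare_inequality_of_convex (hB : Convex ℝ B) (hBm : MeasurableSet B)
    (hBb : Bornology.IsBounded B) {f : E → F} (hf : ContDiff ℝ 1 f) :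
    μ.real B * ∫ x in B, ‖f x‖ ^ 2 ∂μ - ‖∫ x in B, f x ∂μ‖ ^ 2 ≤
      2 ^ finrank ℝ E / 2 * diam B ^ 2 * μ.real B * ∫ x in B, ‖fderiv ℝ f x‖ ^ 2 ∂μ := by
  have hB_top : μ B ≠ ⊤ := hBb.measure_lt_top.ne
  have : IsFiniteMeasure (μ.restrict B) := ⟨by simpa using hB_top.lt_top⟩
  have hf' : Continuous (fderiv ℝ f) := hf.continuous_fderiv one_ne_zero
  have hmem : MemLp f 2 (μ.restrict B) := memLp_two_restrict_of_isBounded hBb hf.continuous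
  have key := lintegral_lintegral_enorm_lineMap_sub_sq_le (μ := μ) hB hBm hBb
    (right_mem_Icc.2 zero_le_one) hf
  simp_rw [lineMap_apply_one, one_mul] at key
  rw [lintegral_lintegral_enorm_sub_sq hmem,
    lintegral_enorm_sq_eq_ofReal (integrableOn_of_isBounded hBb (hf'.norm.pow 2)),
    ← ofReal_measureReal hB_top, ← ENNReal.ofReal_ofNat 2, ← ENNReal.ofReal_pow (by positivity),
    ← ENNReal.ofReal_pow (by positivity), ← ENNReal.ofReal_mul (by positivity),
    ← ENNReal.ofReal_mul (by positivity), ← ENNReal.ofReal_mul (by positivity),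
    ENNReal.ofReal_le_ofReal_iff (by positivity), measureReal_restrict_apply_univ] at key
  linarith

theorem integral_norm_sq_sub_one_le_of_convex (hB : Convex ℝ B) (hBm : MeasurableSet B)
    (hBb : Bornology.IsBounded B) {f : E → F} (hf : ContDiff ℝ 1 f) (hV : 0 < μ.real B)
    (hmean : ‖∫ x in B, f x ∂μ‖ ^ 2 ≤ μ.real B) :
    ∫ x in B, ‖f x‖ ^ 2 ∂μ - 1 ≤
      2 ^ finrank ℝ E / 2 * diam B ^ 2 * ∫ x in B, ‖fderiv ℝ f x‖ ^ 2 ∂μ := by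
  refine le_of_mul_le_mul_left ?_ hV
  linarith [poincare_inequality_of_convex (μ := μ) hB hBm hBb hf]

theorem integral_norm_sq_le_of_convex (hB : Convex ℝ B) (hBm : MeasurableSet B)
    (hBb : Bornology.IsBounded B) {f : E → F} (hf : ContDiff ℝ 1 f)
    (hmean : ‖∫ x in B, f x ∂μ‖ ^ 2 ≤ μ.real B) {a : ℝ} (ha : 1 < a)
    (haM : a ≤ ∫ x in B, ‖f x‖ ^ 2 ∂μ) :
    ∫ x in B, ‖f x‖ ^ 2 ∂μ ≤ a / (a - 1) *
      (2 ^ finrank ℝ E / 2 * diam B ^ 2 * ∫ x in B, ‖fderiv ℝ f x‖ ^ 2 ∂μ) := by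
  have hV : 0 < μ.real B :=
    measureReal_pos_of_setIntegral_ne_zero hBb.measure_lt_top.ne (by linarith : (0 : ℝ) < _).ne'
  calc ∫ x in B, ‖f x‖ ^ 2 ∂μ ≤ a / (a - 1) * (∫ x in B, ‖f x‖ ^ 2 ∂μ - 1) := by
        rw [div_mul_eq_mul_div, le_div_iff₀ (by linarith)]
        linarith
    _ ≤ a / (a - 1) *
          (2 ^ finrank ℝ E / 2 * diam B ^ 2 * ∫ x in B, ‖fderiv ℝ f x‖ ^ 2 ∂μ) :=
        mul_le_mul_of_nonneg_left
          (integral_norm_sq_sub_one_le_of_convex hB hBm hBb hf hV hmean)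
          (div_nonneg (by linarith) (by linarith))

end Poincare

theorem deriv_smoothTransition_of_nonpos {t : ℝ} (ht : t ≤ 0) :
    deriv Real.smoothTransition t = 0 := by
  refine IsLocalMin.deriv_eq_zero (Filter.Eventually.of_forall fun y => ?_)
  rw [Real.smoothTransition.zero_of_nonpos ht]
  exact Real.smoothTransition.nonneg y

theorem deriv_smoothTransition_of_one_le {t : ℝ} (ht : 1 ≤ t) :
    deriv Real.smoothTransition t = 0 := by
  refine IsLocalMax.deriv_eq_zero (Filter.Eventually.of_forall fun y => ?_)
  rw [Real.smoothTransition.one_of_one_le ht]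
  exact Real.smoothTransition.le_one y

/-- The best Lipschitz constant of `Real.smoothTransition`, the profile of every truncation below.
The supremum is finite because the derivative is continuous and vanishes outside `[0, 1]`. -/
noncomputable def smoothTransitionSlope : ℝ := ⨆ t, |deriv Real.smoothTransition t|

theorem abs_deriv_smoothTransition_le (t : ℝ) :
    |deriv Real.smoothTransition t| ≤ smoothTransitionSlope := by
  have hcont : Continuous (deriv Real.smoothTransition) :=
    Real.smoothTransition.contDiff.continuous_deriv_one
  have hsupp : HasCompactSupport (deriv Real.smoothTransition) := by
    refine HasCompactSupport.intro (isCompact_Icc (a := 0) (b := 1)) fun x hx => ?_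
    rcases not_and_or.1 hx with h | h
    · exact deriv_smoothTransition_of_nonpos (not_le.1 h).le
    · exact deriv_smoothTransition_of_one_le (not_le.1 h).le
  exact le_ciSup (f := fun t => |deriv Real.smoothTransition t|)
    (hcont.abs.bddAbove_range_of_hasCompactSupport hsupp.norm) t

section LevelTruncation

/-- The truncation of `‖U‖ ^ 2` at level `θ`: equal to `0` where `‖U‖ ^ 2 ≤ θ`, to `1` where
`2 * θ ≤ ‖U‖ ^ 2`, and as smooth as `U`. -/
noncomputable def levelTruncation {α F : Type*} [Norm F] (U : α → F) (θ : ℝ) (x : α) : ℝ :=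
  Real.smoothTransition (‖U x‖ ^ 2 / θ - 1)

theorem levelTruncation_eq_one {α F : Type*} [Norm F] {U : α → F} {θ : ℝ} {x : α}
    (hθ : 0 < θ) (hx : 2 * θ ≤ ‖U x‖ ^ 2) :
    levelTruncation U θ x = 1 :=
  Real.smoothTransition.one_of_one_le (by linarith [(le_div_iff₀ hθ).2 hx])

theorem lt_norm_sq_of_levelTruncation_ne_zero {α F : Type*} [Norm F] {U : α → F} {θ : ℝ} {x : α}
    (hθ : 0 < θ) (hx : levelTruncation U θ x ≠ 0) :
    θ < ‖U x‖ ^ 2 := by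
  contrapose! hx
  exact Real.smoothTransition.zero_of_nonpos (by linarith [(div_le_one₀ hθ).2 hx])

variable {E F : Type*} [NormedAddCommGroup E] [NormedSpace ℝ E] [NormedAddCommGroup F]
  [InnerProductSpace ℝ F] {U : E → F} {θ : ℝ} {x : E}

theorem contDiff_levelTruncation (hU : ContDiff ℝ 1 U) : ContDiff ℝ 1 (levelTruncation U θ) :=
  Real.smoothTransition.contDiff.comp (((hU.norm_sq ℝ).div_const θ).sub contDiff_const)

theorem norm_fderiv_levelTruncation_le (hU : DifferentiableAt ℝ U x) (hθ : 0 < θ) :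
    ‖fderiv ℝ (levelTruncation U θ) x‖ ≤
      |deriv Real.smoothTransition (‖U x‖ ^ 2 / θ - 1)| * (2 * ‖U x‖ * ‖fderiv ℝ U x‖ / θ) := by
  have hsq : HasFDerivAt (fun x => ‖U x‖ ^ 2 / θ - 1)
      (θ⁻¹ • ((2 : ℝ) • (innerSL ℝ (U x)).comp (fderiv ℝ U x))) x := by
    simpa only [div_eq_inv_mul, ofNat_smul_eq_nsmul] using
      (hU.hasFDerivAt.norm_sq.const_mul θ⁻¹).sub_const 1
  have hst : DifferentiableAt ℝ Real.smoothTransition (‖U x‖ ^ 2 / θ - 1) :=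
    Real.smoothTransition.contDiff.differentiable one_ne_zero _
  have hcomp : θ⁻¹ * (2 * ‖(innerSL ℝ (U x)).comp (fderiv ℝ U x)‖) ≤
      2 * ‖U x‖ * ‖fderiv ℝ U x‖ / θ := by
    rw [div_eq_inv_mul, mul_assoc]
    gcongr
    simpa only [innerSL_apply_norm] using (innerSL ℝ (U x)).opNorm_comp_le (fderiv ℝ U x)
  rw [show levelTruncation U θ = Real.smoothTransition ∘ fun x => ‖U x‖ ^ 2 / θ - 1 from rfl,
    (hst.hasDerivAt.comp_hasFDerivAt x hsq).fderiv, norm_smul, norm_smul, Real.norm_eq_abs,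
    norm_smul, norm_inv, Real.norm_of_nonneg hθ.le, Real.norm_ofNat]
  gcongr

theorem enorm_fderiv_levelTruncation_sq_le (hU : DifferentiableAt ℝ U x) (hθ : 0 < θ) :
    ‖fderiv ℝ (levelTruncation U θ) x‖ₑ ^ 2 ≤
      {x | ‖U x‖ ^ 2 ∈ Ico θ (2 * θ)}.indicator
        (fun x => ENNReal.ofReal (8 * smoothTransitionSlope ^ 2 / θ) * ‖fderiv ℝ U x‖ₑ ^ 2) x := by
  have hle := norm_fderiv_levelTruncation_le hU hθ
  by_cases hx : ‖U x‖ ^ 2 ∈ Ico θ (2 * θ)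
  · rw [indicator_of_mem (by exact hx), ← ofReal_norm, ← ofReal_norm,
      ← ENNReal.ofReal_pow (norm_nonneg _), ← ENNReal.ofReal_pow (norm_nonneg _),
      ← ENNReal.ofReal_mul (by positivity)]
    refine ENNReal.ofReal_le_ofReal ?_
    calc ‖fderiv ℝ (levelTruncation U θ) x‖ ^ 2
        ≤ (smoothTransitionSlope * (2 * ‖U x‖ * ‖fderiv ℝ U x‖ / θ)) ^ 2 := by
          gcongr
          exact hle.trans (by gcongr; exact abs_deriv_smoothTransition_le _)
      _ = 4 * smoothTransitionSlope ^ 2 * ‖fderiv ℝ U x‖ ^ 2 / θ ^ 2 * ‖U x‖ ^ 2 := by ring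
      _ ≤ 4 * smoothTransitionSlope ^ 2 * ‖fderiv ℝ U x‖ ^ 2 / θ ^ 2 * (2 * θ) := by
          gcongr
          exact hx.2.le
      _ = 8 * smoothTransitionSlope ^ 2 / θ * ‖fderiv ℝ U x‖ ^ 2 := by
          field_simp
          ring
  · have hzero : deriv Real.smoothTransition (‖U x‖ ^ 2 / θ - 1) = 0 := by
      rcases not_and_or.1 hx with h | h
      · exact deriv_smoothTransition_of_nonpos
          (by linarith [(div_le_one₀ hθ).2 (not_le.1 h).le])
      · exact deriv_smoothTransition_of_one_le
          (by linarith [(le_div_iff₀ hθ).2 (not_lt.1 h)])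
    rw [hzero, abs_zero, zero_mul] at hle
    rw [← ofReal_norm, le_antisymm hle (norm_nonneg _), ENNReal.ofReal_zero,
      zero_pow two_ne_zero]
    exact zero_le

end LevelTruncation

section Capacity

variable {E : Type*} [NormedAddCommGroup E] [NormedSpace ℝ E] [FiniteDimensional ℝ E]
  [MeasurableSpace E] [BorelSpace E] {μ : Measure E} [μ.IsAddHaarMeasure]
  {B : Set E} {s : ℝ} {g : E → ℝ}

theorem measure_le_two_mul_lintegral_enorm_lineMap_sub_one_sq (hB : Convex ℝ B)
    (hBm : MeasurableSet B) (hBb : Bornology.IsBounded B) (hs : 0 < s) (hs1 : s ≤ 1)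
    (hg : Measurable g)
    (hsupp : 2 * (ENNReal.ofReal (s ^ finrank ℝ E)⁻¹ * μ (B ∩ Function.support g)) ≤ μ B)
    {x : E} (hx : x ∈ B) :
    μ B ≤ 2 * ∫⁻ y in B, ‖g (lineMap x y s) - 1‖ₑ ^ 2 ∂μ := by
  have hm : MeasurableSet (Function.support g) := measurableSet_support hg
  have hpoint (z : E) : 1 ≤ (Function.support g).indicator 1 z + ‖g z - 1‖ₑ ^ 2 := by
    by_cases hz : g z = 0 <;> simp [hz]
  have hmass : μ B ≤ ENNReal.ofReal (s ^ finrank ℝ E)⁻¹ * μ (B ∩ Function.support g) +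
      ∫⁻ y in B, ‖g (lineMap x y s) - 1‖ₑ ^ 2 ∂μ := by
    calc μ B ≤ ∫⁻ y in B, (Function.support g).indicator 1 (lineMap x y s) +
          ‖g (lineMap x y s) - 1‖ₑ ^ 2 ∂μ := by
          rw [← setLIntegral_one]
          exact lintegral_mono fun y => hpoint _
      _ = ∫⁻ y in B, (Function.support g).indicator 1 (lineMap x y s) ∂μ +
            ∫⁻ y in B, ‖g (lineMap x y s) - 1‖ₑ ^ 2 ∂μ :=
          lintegral_add_left ((measurable_one.indicator hm).comp (by fun_prop)) _
      _ ≤ _ := by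
          gcongr
          refine (setLIntegral_comp_lineMap_le hB hBm hs hs1 (measurable_one.indicator hm)
            hx).trans_eq ?_
          rw [lintegral_indicator_one hm, Measure.restrict_apply hm, inter_comm]
  refine (ENNReal.add_le_add_iff_left hBb.measure_lt_top.ne (a := μ B)).1 ?_
  calc μ B + μ B ≤ 2 * (ENNReal.ofReal (s ^ finrank ℝ E)⁻¹ * μ (B ∩ Function.support g)) +
        2 * ∫⁻ y in B, ‖g (lineMap x y s) - 1‖ₑ ^ 2 ∂μ := by
        rw [← two_mul, ← mul_add]
        gcongr
    _ ≤ _ := by gcongr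

/-- Contracting `B` by the factor `s` towards a point where `g = 1` still leaves half of the
contracted copy outside the support of `g`, so `g` oscillates at scale `s * diam B`. -/
theorem measure_eq_one_le_of_measure_support_le (hB : Convex ℝ B) (hBm : MeasurableSet B)
    (hBb : Bornology.IsBounded B) (hs : 0 < s) (hs1 : s ≤ 1) (hg : ContDiff ℝ 1 g)
    (hsupp : 2 * (ENNReal.ofReal (s ^ finrank ℝ E)⁻¹ * μ (B ∩ Function.support g)) ≤ μ B) :
    μ (B ∩ {x | g x = 1}) ≤ 2 * ENNReal.ofReal (s * diam B) ^ 2 *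
      (2 ^ finrank ℝ E * ∫⁻ x in B, ‖fderiv ℝ g x‖ₑ ^ 2 ∂μ) := by
  rcases eq_or_ne (μ B) 0 with hB0 | hB0
  · simp [measure_mono_null inter_subset_left hB0]
  have hm : MeasurableSet {x | g x = 1} := measurableSet_eq_fun hg.continuous.measurable (by simp)
  refine (ENNReal.mul_le_mul_iff_right hB0 hBb.measure_lt_top.ne).1 ?_
  calc μ B * μ (B ∩ {x | g x = 1}) = ∫⁻ _ in B ∩ {x | g x = 1}, μ B ∂μ := by
        rw [setLIntegral_const]
    _ ≤ ∫⁻ x in B ∩ {x | g x = 1}, 2 * ∫⁻ y in B, ‖g (lineMap x y s) - g x‖ₑ ^ 2 ∂μ ∂μ := by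
        refine setLIntegral_mono' (hBm.inter hm) fun x hx => ?_
        rw [hx.2]
        exact measure_le_two_mul_lintegral_enorm_lineMap_sub_one_sq hB hBm hBb hs hs1
          hg.continuous.measurable hsupp hx.1
    _ ≤ 2 * ∫⁻ x in B, ∫⁻ y in B, ‖g (lineMap x y s) - g x‖ₑ ^ 2 ∂μ ∂μ := by
        rw [lintegral_const_mul' _ _ (by simp)]
        gcongr
        exact inter_subset_left
    _ ≤ 2 * (ENNReal.ofReal (s * diam B) ^ 2 *
          (2 ^ finrank ℝ E * μ B * ∫⁻ x in B, ‖fderiv ℝ g x‖ₑ ^ 2 ∂μ)) := by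
        gcongr
        exact lintegral_lintegral_enorm_lineMap_sub_sq_le hB hBm hBb ⟨hs.le, hs1⟩ hg
    _ = _ := by ring

end Capacity

theorem ofReal_rpow_le_add_tsum_dyadic {τ p ρ : ℝ} (hτ : 0 < τ) (hp : 0 ≤ p) (hρ : 0 ≤ ρ) :
    ENNReal.ofReal (ρ ^ (1 + p)) ≤ ENNReal.ofReal ((4 * τ) ^ p * ρ) +
      ∑' k : ℕ, (Ici (2 * (2 ^ k * τ))).indicator
        (fun _ => ENNReal.ofReal ((4 * (2 ^ k * τ)) ^ (1 + p))) ρ := by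
  rcases lt_or_ge ρ (2 * τ) with h | h
  · refine le_add_right (ENNReal.ofReal_le_ofReal ?_)
    rw [Real.rpow_add_of_nonneg hρ zero_le_one hp, Real.rpow_one, mul_comm]
    gcongr
    linarith
  · obtain ⟨k, hk, hk'⟩ := exists_nat_pow_near ((one_le_div₀ (by positivity)).2 h) one_lt_two
    rw [le_div_iff₀ (by positivity)] at hk
    rw [div_lt_iff₀ (by positivity), pow_succ] at hk'
    refine le_add_left (le_trans ?_ (ENNReal.le_tsum k))
    rw [indicator_of_mem (mem_Ici.2 (by linarith))]
    gcongr
    linarith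

theorem lintegral_rpow_le_add_tsum_dyadic {α : Type*} [MeasurableSpace α] {μ : Measure α}
    {f : α → ℝ} (hf : Measurable f) (hf0 : 0 ≤ f) {τ p : ℝ} (hτ : 0 < τ) (hp : 0 ≤ p) :
    ∫⁻ x, ENNReal.ofReal (f x ^ (1 + p)) ∂μ ≤
      ENNReal.ofReal ((4 * τ) ^ p) * ∫⁻ x, ENNReal.ofReal (f x) ∂μ +
        ∑' k : ℕ, ENNReal.ofReal ((4 * (2 ^ k * τ)) ^ (1 + p)) * μ {x | 2 * (2 ^ k * τ) ≤ f x} := by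
  have hm (k : ℕ) : MeasurableSet {x | 2 * (2 ^ k * τ) ≤ f x} :=
    measurableSet_le measurable_const hf
  calc ∫⁻ x, ENNReal.ofReal (f x ^ (1 + p)) ∂μ
      ≤ ∫⁻ x, ENNReal.ofReal ((4 * τ) ^ p * f x) +
          ∑' k : ℕ, {x | 2 * (2 ^ k * τ) ≤ f x}.indicator
            (fun _ => ENNReal.ofReal ((4 * (2 ^ k * τ)) ^ (1 + p))) x ∂μ :=
        lintegral_mono fun x => ofReal_rpow_le_add_tsum_dyadic hτ hp (hf0 x)
    _ = _ := by
        simp_rw [ENNReal.ofReal_mul (Real.rpow_nonneg (by positivity : 0 ≤ 4 * τ) p)]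
        rw [lintegral_add_left (by fun_prop), lintegral_const_mul _ (by fun_prop),
          lintegral_tsum fun k => (measurable_const.indicator (hm k)).aemeasurable]
        simp_rw [lintegral_indicator_const (hm _)]

theorem tsum_setLIntegral_dyadic_le {α : Type*} [MeasurableSpace α] {μ : Measure α} {B : Set α}
    (hBm : MeasurableSet B) {f : α → ℝ} (hf : Measurable f) {τ : ℝ} (hτ : 0 ≤ τ) (h : α → ℝ≥0∞) :
    ∑' k : ℕ, ∫⁻ x in B ∩ {x | f x ∈ Ico (2 ^ k * τ) (2 * (2 ^ k * τ))}, h x ∂μ ≤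
      ∫⁻ x in B, h x ∂μ := by
  have hmono : Monotone fun k : ℕ => 2 ^ k * τ := fun i j hij => by
    dsimp only
    gcongr
    exact one_le_two
  have hdisj : Pairwise (Function.onFun Disjoint fun k : ℕ =>
      B ∩ {x | f x ∈ Ico (2 ^ k * τ) (2 * (2 ^ k * τ))}) := fun i j hij => by
    have := hmono.pairwise_disjoint_on_Ico_succ hij
    simp only [Function.onFun, Order.succ_eq_add_one, pow_succ', mul_assoc] at this
    exact (this.preimage f).mono inter_subset_right inter_subset_right
  have hm (k : ℕ) : MeasurableSet (B ∩ {x | f x ∈ Ico (2 ^ k * τ) (2 * (2 ^ k * τ))}) :=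
    hBm.inter (hf measurableSet_Ico)
  rw [← lintegral_iUnion hm hdisj]
  exact lintegral_mono_set (iUnion_subset fun k => inter_subset_left)

section LevelTruncationIntegrals

variable {E F : Type*} [NormedAddCommGroup E] [MeasurableSpace E] [OpensMeasurableSpace E]
  {μ : Measure E} [NormedAddCommGroup F] {B : Set E} {U : E → F} {θ : ℝ}

theorem mul_measure_support_levelTruncation_le (hU : Continuous U) (hθ : 0 < θ) :
    ENNReal.ofReal θ * μ (B ∩ Function.support (levelTruncation U θ)) ≤
      ∫⁻ x in B, ‖U x‖ₑ ^ 2 ∂μ := by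
  have hUm : Measurable fun x => ‖U x‖ₑ ^ 2 := hU.enorm.measurable.pow_const 2
  refine le_trans ?_ (mul_meas_ge_le_lintegral hUm (ENNReal.ofReal θ))
  rw [Measure.restrict_apply (measurableSet_le measurable_const hUm), inter_comm]
  gcongr
  intro x hx
  rw [mem_ofPred, ← ofReal_norm, ← ENNReal.ofReal_pow (norm_nonneg _)]
  exact ENNReal.ofReal_le_ofReal (lt_norm_sq_of_levelTruncation_ne_zero hθ hx).le

theorem setLIntegral_enorm_fderiv_levelTruncation_sq_le [NormedSpace ℝ E] [InnerProductSpace ℝ F]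
    (hU : ContDiff ℝ 1 U) (hθ : 0 < θ) :
    ∫⁻ x in B, ‖fderiv ℝ (levelTruncation U θ) x‖ₑ ^ 2 ∂μ ≤
      ENNReal.ofReal (8 * smoothTransitionSlope ^ 2 / θ) *
        ∫⁻ x in B ∩ {x | ‖U x‖ ^ 2 ∈ Ico θ (2 * θ)}, ‖fderiv ℝ U x‖ₑ ^ 2 ∂μ := by
  have hm : MeasurableSet {x | ‖U x‖ ^ 2 ∈ Ico θ (2 * θ)} :=
    (hU.continuous.norm.pow 2).measurable measurableSet_Ico
  rw [← lintegral_const_mul' _ _ ENNReal.ofReal_ne_top, inter_comm,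
    ← Measure.restrict_restrict hm, ← lintegral_indicator hm]
  exact lintegral_mono fun x =>
    enorm_fderiv_levelTruncation_sq_le (hU.differentiable one_ne_zero x) hθ

end LevelTruncationIntegrals

section GagliardoNirenberg

variable {E F : Type*} [NormedAddCommGroup E] [NormedSpace ℝ E] [FiniteDimensional ℝ E]
  [MeasurableSpace E] [BorelSpace E] {μ : Measure E} [μ.IsAddHaarMeasure]
  [NormedAddCommGroup F] [InnerProductSpace ℝ F]
  {B : Set E} {U : E → F}

theorem measure_superlevel_le (hB : Convex ℝ B) (hBm : MeasurableSet B)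
    (hBb : Bornology.IsBounded B) (hU : ContDiff ℝ 1 U) {s θ : ℝ} (hs : 0 < s) (hs1 : s ≤ 1)
    (hθ : 0 < θ)
    (hmass : 2 * ∫⁻ x in B, ‖U x‖ₑ ^ 2 ∂μ ≤ ENNReal.ofReal (θ * s ^ finrank ℝ E) * μ B) :
    μ (B ∩ {x | 2 * θ ≤ ‖U x‖ ^ 2}) ≤
      ENNReal.ofReal
          (2 * (s * diam B) ^ 2 * 2 ^ finrank ℝ E * (8 * smoothTransitionSlope ^ 2 / θ)) *
        ∫⁻ x in B ∩ {x | ‖U x‖ ^ 2 ∈ Ico θ (2 * θ)}, ‖fderiv ℝ U x‖ₑ ^ 2 ∂μ := by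
  have hsupp : 2 * (ENNReal.ofReal (s ^ finrank ℝ E)⁻¹ *
      μ (B ∩ Function.support (levelTruncation U θ))) ≤ μ B := by
    have hθs : ENNReal.ofReal (θ * s ^ finrank ℝ E) ≠ 0 :=
      (ENNReal.ofReal_pos.2 (by positivity)).ne'
    refine (ENNReal.mul_le_mul_iff_right hθs ENNReal.ofReal_ne_top).1 (le_trans (le_of_eq ?_)
      ((mul_le_mul_right (mul_measure_support_levelTruncation_le hU.continuous hθ) 2).trans hmass))
    rw [mul_left_comm, ← mul_assoc (ENNReal.ofReal _), ← ENNReal.ofReal_mul (by positivity),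
      mul_inv_cancel_right₀ (by positivity)]
  calc μ (B ∩ {x | 2 * θ ≤ ‖U x‖ ^ 2}) ≤ μ (B ∩ {x | levelTruncation U θ x = 1}) := by
        gcongr
        exact levelTruncation_eq_one hθ
    _ ≤ 2 * ENNReal.ofReal (s * diam B) ^ 2 *
          (2 ^ finrank ℝ E * ∫⁻ x in B, ‖fderiv ℝ (levelTruncation U θ) x‖ₑ ^ 2 ∂μ) :=
        measure_eq_one_le_of_measure_support_le hB hBm hBb hs hs1 (contDiff_levelTruncation hU)
          hsupp
    _ ≤ 2 * ENNReal.ofReal (s * diam B) ^ 2 * (2 ^ finrank ℝ E *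
          (ENNReal.ofReal (8 * smoothTransitionSlope ^ 2 / θ) *
            ∫⁻ x in B ∩ {x | ‖U x‖ ^ 2 ∈ Ico θ (2 * θ)}, ‖fderiv ℝ U x‖ₑ ^ 2 ∂μ)) := by
        gcongr
        exact setLIntegral_enorm_fderiv_levelTruncation_sq_le hU hθ
    _ = _ := by
        rw [ENNReal.ofReal_mul (p := 2 * (s * diam B) ^ 2 * 2 ^ finrank ℝ E) (by positivity),
          ENNReal.ofReal_mul (p := 2 * (s * diam B) ^ 2) (by positivity),
          ENNReal.ofReal_mul zero_le_two, ENNReal.ofReal_pow (p := s * diam B) (by positivity),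
          ENNReal.ofReal_pow zero_le_two, ENNReal.ofReal_ofNat]
        ring

theorem rpow_mul_measure_superlevel_le [Nontrivial E] (hB : Convex ℝ B) (hBm : MeasurableSet B)
    (hBb : Bornology.IsBounded B) (hU : ContDiff ℝ 1 U) {τ r : ℝ} (hτ : 0 < τ) (hr : 1 ≤ r)
    (hmass : 2 * ∫⁻ x in B, ‖U x‖ₑ ^ 2 ∂μ ≤ ENNReal.ofReal τ * μ B) :
    ENNReal.ofReal ((4 * (r * τ)) ^ (1 + 2 / (finrank ℝ E : ℝ))) *
        μ (B ∩ {x | 2 * (r * τ) ≤ ‖U x‖ ^ 2}) ≤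
      ENNReal.ofReal ((4 * τ) ^ (2 / (finrank ℝ E : ℝ)) *
          (64 * 2 ^ finrank ℝ E * smoothTransitionSlope ^ 2 * diam B ^ 2)) *
        ∫⁻ x in B ∩ {x | ‖U x‖ ^ 2 ∈ Ico (r * τ) (2 * (r * τ))}, ‖fderiv ℝ U x‖ₑ ^ 2 ∂μ := by
  set n := finrank ℝ E
  have hn : (n : ℝ) ≠ 0 := Nat.cast_ne_zero.2 finrank_pos.ne'
  have hr0 : 0 < r := by linarith
  -- At height `r * τ` the truncation lives on a fraction at most `1 / (2 * r)` of `B`, so half of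
  -- a copy of `B` contracted by `r ^ (-1 / n)` avoids it.
  set s : ℝ := r ^ (-(1 / n) : ℝ)
  have hs : 0 < s := Real.rpow_pos_of_pos hr0 _
  have hs1 : s ≤ 1 := Real.rpow_le_one_of_one_le_of_nonpos hr (neg_nonpos.2 (by positivity))
  have hsn : s ^ n = r⁻¹ := by
    rw [← Real.rpow_mul_natCast hr0.le, neg_mul, one_div_mul_cancel hn, Real.rpow_neg_one]
  have hs2 : r ^ (2 / n : ℝ) * s ^ 2 = 1 := by
    rw [← Real.rpow_mul_natCast hr0.le, ← Real.rpow_add hr0,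
      show (2 / n : ℝ) + -(1 / n) * (2 : ℕ) = 0 by push_cast; ring, Real.rpow_zero]
  have hsuper := measure_superlevel_le (θ := r * τ) hB hBm hBb hU hs hs1 (by positivity)
    (hmass.trans_eq (by rw [hsn, mul_comm r, mul_inv_cancel_right₀ hr0.ne']))
  refine (mul_le_mul_right hsuper _).trans_eq ?_
  rw [← mul_assoc, ← ENNReal.ofReal_mul (by positivity)]
  congr 2
  calc (4 * (r * τ)) ^ (1 + 2 / n : ℝ) *
        (2 * (s * diam B) ^ 2 * 2 ^ n * (8 * smoothTransitionSlope ^ 2 / (r * τ)))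
      = (4 * τ) ^ (2 / n : ℝ) * (64 * 2 ^ n * smoothTransitionSlope ^ 2 * diam B ^ 2) *
          (r ^ (2 / n : ℝ) * s ^ 2) := by
        rw [Real.rpow_one_add' (by positivity) (by positivity), mul_left_comm 4 r τ,
          Real.mul_rpow hr0.le (by positivity)]
        field_simp
        ring
    _ = (4 * τ) ^ (2 / n : ℝ) * (64 * 2 ^ n * smoothTransitionSlope ^ 2 * diam B ^ 2) := by
        rw [hs2, mul_one]

theorem lintegral_rpow_one_add_two_div_le [Nontrivial E] (hB : Convex ℝ B) (hBm : MeasurableSet B)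
    (hBb : Bornology.IsBounded B) (hU : ContDiff ℝ 1 U) {τ : ℝ} (hτ : 0 < τ)
    (hmass : 2 * ∫⁻ x in B, ‖U x‖ₑ ^ 2 ∂μ ≤ ENNReal.ofReal τ * μ B) :
    ∫⁻ x in B, ENNReal.ofReal ((‖U x‖ ^ 2) ^ (1 + 2 / (finrank ℝ E : ℝ))) ∂μ ≤
      ENNReal.ofReal ((4 * τ) ^ (2 / (finrank ℝ E : ℝ))) * (∫⁻ x in B, ‖U x‖ₑ ^ 2 ∂μ +
        ENNReal.ofReal (64 * 2 ^ finrank ℝ E * smoothTransitionSlope ^ 2 * diam B ^ 2) *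
          ∫⁻ x in B, ‖fderiv ℝ U x‖ₑ ^ 2 ∂μ) := by
  set n := finrank ℝ E
  set p : ℝ := 2 / n
  have hρ : Measurable fun x => ‖U x‖ ^ 2 := (hU.continuous.norm.pow 2).measurable
  calc ∫⁻ x in B, ENNReal.ofReal ((‖U x‖ ^ 2) ^ (1 + p)) ∂μ
      ≤ ENNReal.ofReal ((4 * τ) ^ p) * ∫⁻ x in B, ENNReal.ofReal (‖U x‖ ^ 2) ∂μ +
          ∑' k : ℕ, ENNReal.ofReal ((4 * (2 ^ k * τ)) ^ (1 + p)) *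
            μ.restrict B {x | 2 * (2 ^ k * τ) ≤ ‖U x‖ ^ 2} :=
        lintegral_rpow_le_add_tsum_dyadic hρ (fun x => by positivity) hτ (by positivity)
    _ ≤ ENNReal.ofReal ((4 * τ) ^ p) * ∫⁻ x in B, ‖U x‖ₑ ^ 2 ∂μ +
          ∑' k : ℕ,
            ENNReal.ofReal ((4 * τ) ^ p * (64 * 2 ^ n * smoothTransitionSlope ^ 2 * diam B ^ 2)) *
              ∫⁻ x in B ∩ {x | ‖U x‖ ^ 2 ∈ Ico (2 ^ k * τ) (2 * (2 ^ k * τ))},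
                ‖fderiv ℝ U x‖ₑ ^ 2 ∂μ := by
        refine add_le_add (le_of_eq ?_) (ENNReal.tsum_le_tsum fun k => ?_)
        · simp_rw [← ofReal_norm, ENNReal.ofReal_pow (norm_nonneg _)]
        · rw [Measure.restrict_apply (measurableSet_le measurable_const hρ), inter_comm]
          exact rpow_mul_measure_superlevel_le hB hBm hBb hU hτ (one_le_pow₀ one_le_two) hmass
    _ ≤ _ := by
        rw [ENNReal.tsum_mul_left, mul_add, ENNReal.ofReal_mul (by positivity), mul_assoc]
        gcongr
        exact tsum_setLIntegral_dyadic_le hBm hρ hτ.le _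

end GagliardoNirenberg

theorem rpow_two_div_mul_sq {n : ℕ} (hn : n ≠ 0) {x y : ℝ} (hx : 0 ≤ x) (hy : 0 ≤ y) :
    x ^ (2 / n : ℝ) * y ^ 2 = (x * y ^ n) ^ (2 / n : ℝ) := by
  rw [Real.mul_rpow hx (by positivity), ← Real.rpow_natCast_mul hy,
    mul_div_cancel₀ _ (by positivity), Real.rpow_two]

section LiebThirring

variable {E F : Type*} [NormedAddCommGroup E] [NormedSpace ℝ E] [FiniteDimensional ℝ E]
  [Nontrivial E] [MeasurableSpace E] [BorelSpace E] {μ : Measure E} [μ.IsAddHaarMeasure]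
  [NormedAddCommGroup F] [InnerProductSpace ℝ F]
  {B : Set E} {U : E → F}

/-- The constant of the gradient term in the `n`-dimensional Gagliardo–Nirenberg–Sobolev inequality
`gagliardo_nirenberg_of_convex`. -/
noncomputable def gagliardoNirenbergConst (n : ℕ) : ℝ :=
  64 * 2 ^ n * smoothTransitionSlope ^ 2

theorem gagliardoNirenbergConst_nonneg (n : ℕ) : 0 ≤ gagliardoNirenbergConst n := by
  unfold gagliardoNirenbergConst
  positivity

theorem gagliardo_nirenberg_of_convex (hB : Convex ℝ B) (hBm : MeasurableSet B)
    (hBb : Bornology.IsBounded B) (hU : ContDiff ℝ 1 U) (hM : 0 < ∫ x in B, ‖U x‖ ^ 2 ∂μ) :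
    ∫ x in B, (‖U x‖ ^ 2) ^ (1 + 2 / (finrank ℝ E : ℝ)) ∂μ ≤
      (8 * ((∫ x in B, ‖U x‖ ^ 2 ∂μ) / μ.real B)) ^ (2 / (finrank ℝ E : ℝ)) *
        (∫ x in B, ‖U x‖ ^ 2 ∂μ + gagliardoNirenbergConst (finrank ℝ E) * diam B ^ 2 *
          ∫ x in B, ‖fderiv ℝ U x‖ ^ 2 ∂μ) := by
  set M := ∫ x in B, ‖U x‖ ^ 2 ∂μ
  have hV : 0 < μ.real B :=
    measureReal_pos_of_setIntegral_ne_zero hBb.measure_lt_top.ne hM.ne'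
  have hUsq : IntegrableOn (fun x => ‖U x‖ ^ 2) B μ :=
    integrableOn_of_isBounded hBb (hU.continuous.norm.pow 2)
  have hU' : IntegrableOn (fun x => ‖fderiv ℝ U x‖ ^ 2) B μ :=
    integrableOn_of_isBounded hBb ((hU.continuous_fderiv one_ne_zero).norm.pow 2)
  have hpow : IntegrableOn (fun x => (‖U x‖ ^ 2) ^ (1 + 2 / (finrank ℝ E : ℝ))) B μ :=
    integrableOn_of_isBounded hBb
      ((hU.continuous.norm.pow 2).rpow_const fun _ => Or.inr (by positivity))
  have hmass : 2 * ∫⁻ x in B, ‖U x‖ₑ ^ 2 ∂μ ≤ ENNReal.ofReal (2 * (M / μ.real B)) * μ B := by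
    rw [lintegral_enorm_sq_eq_ofReal hUsq, ← ofReal_measureReal hBb.measure_lt_top.ne,
      ← ENNReal.ofReal_mul (by positivity), ← ENNReal.ofReal_ofNat 2,
      ← ENNReal.ofReal_mul zero_le_two, mul_assoc 2, div_mul_cancel₀ _ hV.ne']
  have key := lintegral_rpow_one_add_two_div_le hB hBm hBb hU (by positivity) hmass
  rw [← ofReal_integral_eq_lintegral_ofReal hpow (ae_of_all _ fun x => by positivity),
    lintegral_enorm_sq_eq_ofReal hUsq, lintegral_enorm_sq_eq_ofReal hU',
    ← ENNReal.ofReal_mul (by positivity), ← ENNReal.ofReal_add (by positivity) (by positivity),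
    ← ENNReal.ofReal_mul (by positivity), ENNReal.ofReal_le_ofReal_iff (by positivity),
    ← mul_assoc 4 2, show (4 : ℝ) * 2 = 8 by norm_num] at key
  exact key

/-- The constant in the Lieb–Thirring inequality with mass in `[a, b]` on a convex subset `B` of an
`n`-dimensional space, where `κ` bounds the ratio of `diam B ^ n` to the volume of `B`. -/
noncomputable def liebThirringConst (n : ℕ) (κ a b : ℝ) : ℝ :=
  (8 * (κ * b)) ^ (2 / n : ℝ) * ((2 ^ n / 2 + gagliardoNirenbergConst n) * (a / (a - 1)))

theorem liebThirringConst_nonneg (n : ℕ) {κ a b : ℝ} (hκ : 0 ≤ κ) (ha : 1 < a) (hb : 0 ≤ b) :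
    0 ≤ liebThirringConst n κ a b := by
  have := gagliardoNirenbergConst_nonneg n
  have : 0 < a - 1 := by linarith
  unfold liebThirringConst
  positivity

theorem liebThirringConst_pos (n : ℕ) {κ a b : ℝ} (hκ : 0 < κ) (ha : 1 < a) (hb : 0 < b) :
    0 < liebThirringConst n κ a b := by
  have := gagliardoNirenbergConst_nonneg n
  have : 0 < a - 1 := by linarith
  unfold liebThirringConst
  positivity

theorem lieb_thirring_of_norm_sq_integral_le [CompleteSpace F] (hB : Convex ℝ B)
    (hBm : MeasurableSet B) (hBb : Bornology.IsBounded B) {κ : ℝ}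
    (hκ : diam B ^ finrank ℝ E ≤ κ * μ.real B) (hU : ContDiff ℝ 1 U)
    (hmean : ‖∫ x in B, U x ∂μ‖ ^ 2 ≤ μ.real B) {a b : ℝ} (ha : 1 < a)
    (haM : a ≤ ∫ x in B, ‖U x‖ ^ 2 ∂μ) (hMb : ∫ x in B, ‖U x‖ ^ 2 ∂μ ≤ b) :
    ∫ x in B, (‖U x‖ ^ 2) ^ (1 + 2 / (finrank ℝ E : ℝ)) ∂μ ≤
      liebThirringConst (finrank ℝ E) κ a b * ∫ x in B, ‖fderiv ℝ U x‖ ^ 2 ∂μ := by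
  have hgns := gagliardo_nirenberg_of_convex (μ := μ) hB hBm hBb hU (by linarith)
  set n := finrank ℝ E
  set M := ∫ x in B, ‖U x‖ ^ 2 ∂μ
  set T := ∫ x in B, ‖fderiv ℝ U x‖ ^ 2 ∂μ
  have hn : n ≠ 0 := finrank_pos.ne'
  have hM : 0 < M := by linarith
  have hc := gagliardoNirenbergConst_nonneg n
  have hV : 0 < μ.real B :=
    measureReal_pos_of_setIntegral_ne_zero hBb.measure_lt_top.ne hM.ne'
  have one_le : 1 ≤ a / (a - 1) := (one_le_div₀ (by linarith)).2 (by linarith)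
  have mass_le : M ≤ a / (a - 1) * (2 ^ n / 2 * diam B ^ 2 * T) :=
    integral_norm_sq_le_of_convex hB hBm hBb hU hmean ha haM
  have hratio : diam B ^ n / μ.real B ≤ κ := (div_le_iff₀ hV).2 hκ
  have scale_le : (8 * (M / μ.real B)) ^ (2 / n : ℝ) * diam B ^ 2 ≤
      (8 * (κ * b)) ^ (2 / n : ℝ) := by
    calc (8 * (M / μ.real B)) ^ (2 / n : ℝ) * diam B ^ 2
        = (8 * (diam B ^ n / μ.real B * M)) ^ (2 / n : ℝ) := by
          rw [rpow_two_div_mul_sq hn (by positivity) diam_nonneg]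
          ring_nf
      _ ≤ _ := by
          have : 0 ≤ κ := le_trans (by positivity) hratio
          gcongr
  calc _ ≤ (8 * (M / μ.real B)) ^ (2 / n : ℝ) *
        (M + gagliardoNirenbergConst n * diam B ^ 2 * T) := hgns
    _ ≤ (8 * (M / μ.real B)) ^ (2 / n : ℝ) *
          (a / (a - 1) * (2 ^ n / 2 * diam B ^ 2 * T) +
            a / (a - 1) * (gagliardoNirenbergConst n * diam B ^ 2 * T)) := by
        gcongr ?_ * (?_ + ?_)
        exact le_mul_of_one_le_left (by positivity) one_le
    _ = (8 * (M / μ.real B)) ^ (2 / n : ℝ) * diam B ^ 2 *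
          ((2 ^ n / 2 + gagliardoNirenbergConst n) * (a / (a - 1))) * T := by ring
    _ ≤ liebThirringConst n κ a b * T := by
        unfold liebThirringConst
        gcongr

end LiebThirring

theorem opNorm_sq_le_sum_norm_sq_apply {E F κ : Type*} [NormedAddCommGroup E]
    [InnerProductSpace ℝ E] [NormedAddCommGroup F] [NormedSpace ℝ F] [Fintype κ]
    (b : OrthonormalBasis κ ℝ E) (A : E →L[ℝ] F) : ‖A‖ ^ 2 ≤ ∑ i, ‖A (b i)‖ ^ 2 := by
  suffices h : ‖A‖ ≤ √(∑ i, ‖A (b i)‖ ^ 2) from (Real.le_sqrt (norm_nonneg _) (by positivity)).1 h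
  refine A.opNorm_le_bound (by positivity) fun v => ?_
  calc ‖A v‖ = ‖∑ i, b.repr v i • A (b i)‖ := by
        conv_lhs => rw [← b.sum_repr v, map_sum]
        simp_rw [map_smul]
    _ ≤ ∑ i, ‖b.repr v i‖ * ‖A (b i)‖ := by
        refine (norm_sum_le _ _).trans_eq ?_
        simp_rw [norm_smul]
    _ ≤ √(∑ i, ‖b.repr v i‖ ^ 2) * √(∑ i, ‖A (b i)‖ ^ 2) := Real.sum_mul_le_sqrt_mul_sqrt _ _ _
    _ = √(∑ i, ‖A (b i)‖ ^ 2) * ‖v‖ := by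
        rw [← EuclideanSpace.norm_eq, b.repr.norm_map, mul_comm]

section WeightedFamily

variable {ι G : Type*} [NormedAddCommGroup G] [NormedSpace ℝ G] {lam : ι → ℝ}

/-- The vector-valued function `(√λₙ uₙ)ₙ`, whose squared norm is the density `∑ n, λₙ ‖uₙ‖ ^ 2` of
the family `u` with occupation numbers `λ`. -/
noncomputable def weightedFamily {α : Type*} (lam : ι → ℝ) (u : ι → α → G)
    (x : α) : PiLp 2 fun _ : ι => G :=
  WithLp.toLp 2 fun n => √(lam n) • u n x

theorem norm_weightedFamily_sq [Fintype ι] {α : Type*} (hlam : ∀ n, 0 ≤ lam n)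
    (u : ι → α → G) (x : α) :
    ‖weightedFamily lam u x‖ ^ 2 = ∑ n, lam n * ‖u n x‖ ^ 2 := by
  simp_rw [weightedFamily, PiLp.norm_sq_eq_of_L2, norm_smul, mul_pow, Real.norm_eq_abs, sq_abs,
    Real.sq_sqrt (hlam _)]

theorem norm_integral_weightedFamily_sq [Fintype ι] [CompleteSpace G] {α : Type*}
    [MeasurableSpace α] {μ : Measure α} (hlam : ∀ n, 0 ≤ lam n) {u : ι → α → G}
    (hu : ∀ n, Integrable (u n) μ) :
    ‖∫ x, weightedFamily lam u x ∂μ‖ ^ 2 = ∑ n, lam n * ‖∫ x, u n x ∂μ‖ ^ 2 := by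
  have coord (n : ι) :
      (∫ x, weightedFamily lam u x ∂μ) n = √(lam n) • ∫ x, u n x ∂μ := by
    rw [eval_integral_piLp fun n => (hu n).smul √(lam n)]
    exact integral_smul _ _
  simp_rw [PiLp.norm_sq_eq_of_L2, coord, norm_smul, mul_pow, Real.norm_eq_abs, sq_abs,
    Real.sq_sqrt (hlam _)]

variable {E : Type*} [NormedAddCommGroup E] {u : ι → E → G}

theorem contDiff_weightedFamily [Fintype ι] [NormedSpace ℝ E] {k : WithTop ℕ∞}
    (hu : ∀ n, ContDiff ℝ k (u n)) : ContDiff ℝ k (weightedFamily lam u) :=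
  contDiff_piLp' 2 fun n => (hu n).const_smul √(lam n)

theorem fderiv_weightedFamily_apply [Finite ι] [NormedSpace ℝ E] {x : E}
    (hu : ∀ n, DifferentiableAt ℝ (u n) x) (v : E) :
    fderiv ℝ (weightedFamily lam u) x v = weightedFamily lam (fun n => fderiv ℝ (u n) x) v := by
  have := Fintype.ofFinite ι
  have hW : DifferentiableAt ℝ (weightedFamily lam u) x :=
    (differentiableAt_piLp 2).2 fun n => (hu n).const_smul √(lam n)
  ext n
  have hcoord := (PiLp.proj (𝕜 := ℝ) 2 (fun _ : ι => G) n).hasFDerivAt.comp x hW.hasFDerivAt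
  exact DFunLike.congr_fun (hcoord.unique ((hu n).hasFDerivAt.const_smul √(lam n))) v

theorem norm_fderiv_weightedFamily_sq_le [Fintype ι] {E : Type*} [NormedAddCommGroup E]
    [InnerProductSpace ℝ E] {κ : Type*} [Fintype κ] (b : OrthonormalBasis κ ℝ E)
    (hlam : ∀ n, 0 ≤ lam n) {u : ι → E → G} {x : E} (hu : ∀ n, DifferentiableAt ℝ (u n) x) :
    ‖fderiv ℝ (weightedFamily lam u) x‖ ^ 2 ≤
      ∑ n, lam n * ∑ i, ‖fderiv ℝ (u n) x (b i)‖ ^ 2 := by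
  refine (opNorm_sq_le_sum_norm_sq_apply b _).trans_eq ?_
  simp_rw [fderiv_weightedFamily_apply hu, norm_weightedFamily_sq hlam, Finset.mul_sum]
  exact Finset.sum_comm

end WeightedFamily

theorem sum_norm_integral_sq_le_of_orthonormal {𝕜 α ι : Type*} [RCLike 𝕜] [MeasurableSpace α]
    [Fintype ι] [DecidableEq ι] {μ : Measure α} [IsFiniteMeasure μ] {u : ι → α → 𝕜}
    (hu : ∀ n, MemLp (u n) 2 μ)
    (horth : ∀ m n, ∫ x, u m x * starRingEnd 𝕜 (u n x) ∂μ = if m = n then 1 else 0) :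
    ∑ n, ‖∫ x, u n x ∂μ‖ ^ 2 ≤ μ.real univ := by
  have inner_toLp {f g : α → 𝕜} (hf : MemLp f 2 μ) (hg : MemLp g 2 μ) :
      inner 𝕜 (hf.toLp f) (hg.toLp g) = ∫ x, g x * starRingEnd 𝕜 (f x) ∂μ := by
    rw [L2.inner_def]
    refine integral_congr_ae ?_
    filter_upwards [hf.coeFn_toLp, hg.coeFn_toLp] with x hfx hgx
    rw [hfx, hgx, RCLike.inner_apply]
  have hone : MemLp (fun _ : α => (1 : 𝕜)) 2 μ := memLp_const 1
  have orthonormal : Orthonormal 𝕜 fun n => (hu n).toLp (u n) := by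
    rw [orthonormal_iff_ite]
    intro m n
    rw [inner_toLp, horth n m]
    simp only [eq_comm]
  have norm_one_sq : ‖hone.toLp _‖ ^ 2 = μ.real univ := by
    rw [← inner_self_eq_norm_sq (𝕜 := 𝕜), inner_toLp]
    simp [RCLike.smul_re]
  calc ∑ n, ‖∫ x, u n x ∂μ‖ ^ 2 = ∑ n, ‖inner 𝕜 ((hu n).toLp (u n)) (hone.toLp _)‖ ^ 2 := by
        simp_rw [inner_toLp, one_mul, integral_conj, RCLike.norm_conj]
    _ ≤ ‖hone.toLp _‖ ^ 2 := orthonormal.sum_inner_products_le _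
    _ = μ.real univ := norm_one_sq

theorem measureReal_ball_pos {E : Type*} [PseudoMetricSpace E] [ProperSpace E] [MeasurableSpace E]
    (μ : Measure E) [IsFiniteMeasureOnCompacts μ] [μ.IsOpenPosMeasure] (c : E) {r : ℝ}
    (hr : 0 < r) : 0 < μ.real (ball c r) :=
  ENNReal.toReal_pos (measure_ball_pos μ c hr).ne' measure_ball_lt_top.ne

theorem diam_ball_pow_le {E : Type*} [NormedAddCommGroup E] [NormedSpace ℝ E]
    [FiniteDimensional ℝ E] [MeasurableSpace E] [BorelSpace E] (μ : Measure E)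
    [μ.IsAddHaarMeasure] (c : E) {r : ℝ} (hr : 0 < r) :
    diam (ball c r) ^ finrank ℝ E ≤
      2 ^ finrank ℝ E / μ.real (ball 0 1) * μ.real (ball c r) := by
  have hball : 0 < μ.real (ball (0 : E) 1) := measureReal_ball_pos μ 0 one_pos
  calc diam (ball c r) ^ finrank ℝ E ≤ (2 * r) ^ finrank ℝ E := by
        gcongr
        exact diam_ball hr.le
    _ = 2 ^ finrank ℝ E / μ.real (ball 0 1) * μ.real (ball c r) := by
        rw [measureReal_def μ (ball c r), Measure.addHaar_ball_of_pos μ c hr, ENNReal.toReal_mul,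
          ENNReal.toReal_ofReal (by positivity), ← measureReal_def, mul_pow, mul_left_comm]
        field_simp

theorem lieb_thirring_ball_mass_window_general {d : ℕ} (hd : 1 ≤ d)
    {B : Set (EuclideanSpace ℝ (Fin d))} (hB : Convex ℝ B) (hBm : MeasurableSet B)
    (hBb : Bornology.IsBounded B) {κ : ℝ} (hκ : diam B ^ d ≤ κ * volume.real B)
    {ι : Type*} [Fintype ι] {u : ι → EuclideanSpace ℝ (Fin d) → ℂ} {lam : ι → ℝ}
    (hu : ∀ n, ContDiff ℝ 1 (u n)) (hlam : ∀ n, 0 ≤ lam n)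
    (hmean : ∑ n, lam n * ‖∫ x in B, u n x‖ ^ 2 ≤ volume.real B) {a b : ℝ} (ha : 1 < a)
    (haM : a ≤ ∫ x in B, ∑ n, lam n * ‖u n x‖ ^ 2)
    (hMb : ∫ x in B, ∑ n, lam n * ‖u n x‖ ^ 2 ≤ b) :
    ∫ x in B, (∑ n, lam n * ‖u n x‖ ^ 2) ^ (1 + 2 / (d : ℝ)) ≤
      liebThirringConst d κ a b * ∑ n, lam n * ∫ x in B, gradSq (u n) x := by
  have : NeZero d := ⟨by lia⟩
  have hW : ContDiff ℝ 1 (weightedFamily lam u) := contDiff_weightedFamily hu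
  have hgrad (n : ι) : IntegrableOn (gradSq (u n)) B :=
    integrableOn_of_isBounded hBb <| continuous_finsetSum _ fun i _ =>
      (((hu n).continuous_fderiv one_ne_zero).clm_apply continuous_const).norm.pow 2
  have energy_le : ∫ x in B, ‖fderiv ℝ (weightedFamily lam u) x‖ ^ 2 ≤
      ∑ n, lam n * ∫ x in B, gradSq (u n) x := by
    simp_rw [← integral_const_mul]
    rw [← integral_finsetSum _ fun n _ => (hgrad n).const_mul _]
    refine integral_mono (integrableOn_of_isBounded hBb
      ((hW.continuous_fderiv one_ne_zero).norm.pow 2))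
      (integrable_finsetSum _ fun n _ => (hgrad n).const_mul _) fun x => ?_
    simpa only [EuclideanSpace.basisFun_apply, gradSq] using norm_fderiv_weightedFamily_sq_le
      (EuclideanSpace.basisFun (Fin d) ℝ) hlam fun n => (hu n).differentiable one_ne_zero x
  have hconst : 0 ≤ liebThirringConst d κ a b := by
    have hV : 0 < volume.real B := measureReal_pos_of_setIntegral_ne_zero
      hBb.measure_lt_top.ne (lt_of_lt_of_le (by linarith) haM).ne'
    exact liebThirringConst_nonneg d (nonneg_of_mul_nonneg_left (le_trans (by positivity) hκ) hV)
      ha (by linarith)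
  simp_rw [← norm_weightedFamily_sq hlam] at haM hMb ⊢
  rw [← norm_integral_weightedFamily_sq hlam
    fun n => integrableOn_of_isBounded hBb (hu n).continuous] at hmean
  have key := lieb_thirring_of_norm_sq_integral_le (μ := volume) hB hBm hBb
    (by rwa [finrank_euclideanSpace_fin]) hW hmean ha haM hMb
  rw [finrank_euclideanSpace_fin] at key
  exact key.trans (by gcongr)

/-- **Lieb–Thirring inequality on balls**, with mass constraint `a ≤ ∫_B ρ ≤ b`
for fixed `1 < a < b < ∞`; the constant `C = C(d,a,b)` depends only on `d, a, b`. -/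
theorem lieb_thirring_ball_mass_window (d : ℕ) (hd : 1 ≤ d) (a b : ℝ)
    (ha : 1 < a) (hab : a < b) :
    ∃ C : ℝ, 0 < C ∧
      ∀ (c : EuclideanSpace ℝ (Fin d)) (r : ℝ), 0 < r →
      ∀ (N : ℕ) (u : Fin N → EuclideanSpace ℝ (Fin d) → ℂ) (lam : Fin N → ℝ),
        (∀ n, ContDiff ℝ 1 (u n)) →
        (∀ m n : Fin N,
          ∫ x in Metric.ball c r, u m x * (starRingEnd ℂ) (u n x)
            = if m = n then 1 else 0) →
        (∀ n, 0 ≤ lam n ∧ lam n ≤ 1) →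
        a ≤ (∫ x in Metric.ball c r, ∑ n, lam n * ‖u n x‖ ^ 2) →
        (∫ x in Metric.ball c r, ∑ n, lam n * ‖u n x‖ ^ 2) ≤ b →
        ∑ n, lam n * ∫ x in Metric.ball c r, gradSq (u n) x
          ≥ (1 / C) *
            ∫ x in Metric.ball c r, (∑ n, lam n * ‖u n x‖ ^ 2) ^ (1 + 2 / (d : ℝ)) := by
  have hball : 0 < volume.real (ball (0 : EuclideanSpace ℝ (Fin d)) 1) :=
    measureReal_ball_pos volume 0 one_pos
  have hC := liebThirringConst_pos d (div_pos (pow_pos two_pos d) hball) ha (b := b) (by linarith)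
  refine ⟨_, hC, fun c r hr N u lam hu horth hlam haM hMb => ?_⟩
  have : IsFiniteMeasure (volume.restrict (ball c r)) :=
    isFiniteMeasure_restrict.2 measure_ball_lt_top.ne
  have bessel : ∑ n, ‖∫ x in ball c r, u n x‖ ^ 2 ≤ volume.real (ball c r) := by
    simpa using sum_norm_integral_sq_le_of_orthonormal
      (fun n => memLp_two_restrict_of_isBounded isBounded_ball (hu n).continuous) horth
  have hmean : ∑ n, lam n * ‖∫ x in ball c r, u n x‖ ^ 2 ≤ volume.real (ball c r) :=
    (Finset.sum_le_sum fun n _ => mul_le_of_le_one_left (by positivity) (hlam n).2).trans bessel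
  rw [ge_iff_le, one_div, inv_mul_le_iff₀ hC]
  exact lieb_thirring_ball_mass_window_general hd (convex_ball c r) measurableSet_ball
    isBounded_ball (by simpa using diam_ball_pow_le volume c hr) hu (fun n => (hlam n).1) hmean
    ha haM hMb
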